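/- arXiv:2505.07048 — 3 statements merged into one kernel-verified Lean document; each statement's English description precedes it below -/
import Mathlib

section
/- Let Ω be a nonempty open subset of ℂ. Then the set S_uc \ S_u is infinitely pointwise 𝔠-dense-lineable in H(Ω)^ℕ: for every x ∈ S_uc \ S_u there exists a countable family {W_k : k ∈ ℕ} of vector subspaces of H(Ω)^ℕ such that each W_k is dense in H(Ω)^ℕ, each W_k has dimension 𝔠, x ∈ W_k ⊆ (S_uc \ S_u) ∪ {0} for every k, and W_k ∩ W_n = span{x} whenever k ≠ n. -/
open Filter Topology

set_option synthInstance.maxHeartbeats 1000000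
set_option maxHeartbeats 1000000

noncomputable section

/-- The subalgebra of `C(Ω, ℂ)` consisting of (restrictions to `Ω` of) functions
holomorphic on `Ω`. -/
def Hol (Ω : Set ℂ) : Subalgebra ℂ C(Ω, ℂ) where
  carrier := {f | ∃ g : ℂ → ℂ, DifferentiableOn ℂ g Ω ∧ ∀ z : Ω, f z = g z}
  mul_mem' := by
    rintro f₁ f₂ ⟨g₁, hg₁, he₁⟩ ⟨g₂, hg₂, he₂⟩
    exact ⟨g₁ * g₂, hg₁.mul hg₂, fun z => by simp [he₁ z, he₂ z]⟩
  add_mem' := by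
    rintro f₁ f₂ ⟨g₁, hg₁, he₁⟩ ⟨g₂, hg₂, he₂⟩
    exact ⟨g₁ + g₂, hg₁.add hg₂, fun z => by simp [he₁ z, he₂ z]⟩
  algebraMap_mem' := fun c => ⟨fun _ => c, differentiableOn_const c, fun _ => rfl⟩

/-- The space `H(Ω)^ℕ` of sequences of holomorphic functions on `Ω`, with the
product topology (each factor carrying the compact-open topology). -/
abbrev HSeq (Ω : Set ℂ) := ℕ → Hol Ω

/-- Sequences tending to `0` pointwise on `Ω`. -/
def Sp (Ω : Set ℂ) : Set (HSeq Ω) :=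
  {F | ∀ z : Ω, Tendsto (fun n => (F n : C(Ω, ℂ)) z) atTop (𝓝 0)}

/-- Sequences tending to `0` uniformly on each compact subset of `Ω`. -/
def Suc (Ω : Set ℂ) : Set (HSeq Ω) :=
  {F | ∀ K : Set Ω, IsCompact K →
    TendstoUniformlyOn (fun n (z : Ω) => (F n : C(Ω, ℂ)) z) 0 atTop K}

/-- Sequences tending to `0` uniformly on `Ω`. -/
def Su (Ω : Set ℂ) : Set (HSeq Ω) :=
  {F | TendstoUniformly (fun n (z : Ω) => (F n : C(Ω, ℂ)) z) 0 atTop}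

/-- Restriction of a holomorphic function on `Ω₂` to a subset `Ω₁ ⊆ Ω₂`. -/
def holRestrict {Ω₁ Ω₂ : Set ℂ} (h : Ω₁ ⊆ Ω₂) (f : Hol Ω₂) : Hol Ω₁ := by
  refine ⟨(f : C(Ω₂, ℂ)).comp ⟨Set.inclusion h, continuous_inclusion h⟩, ?_⟩
  obtain ⟨g, hg, he⟩ := f.2
  exact ⟨g, hg.mono h, fun z => he ⟨z, h z.2⟩⟩

end

/-!
Write `T` for the inclusion of `H(Ω)` into the space of functions on `Ω` with the topology of
uniform convergence, so that `S_uc \ S_u` consists of the null sequences `x` for which `T ∘ x` is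
not null. For such `x` there is `σ : ℕ → ℕ` such that `T ∘ x` is not null along any fibre of `σ`.
For `‖t‖ ≤ 1` let `v t` be a null sequence whose terms are eventually `t ^ σ n • x n`. A linear
combination of the `v t` is eventually `b (σ n) • x n`, where `b` is the same combination of the
geometric sequences `j ↦ t ^ j`. These are linearly independent, so `b j ≠ 0` for some `j` unless
the combination is trivial, and then `T` does not map it to a null sequence, as one sees along the
fibre over `j`.

There are as many `t` in the open unit ball as triples `(k, F, m)` with `k, m : ℕ` and `F` a
sequence in `H(Ω)`. Letting the first `m` terms of `v t` be those of `F` makes the span of the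
`v t` with label `k` dense. Adjoining `v 1 = x` to each of these spans gives the required
subspaces.
-/

open Cardinal Metric

universe u

section Cardinality

theorem mk_continuousMap_le_continuum {X Y : Type u} [TopologicalSpace X]
    [TopologicalSpace.SeparableSpace X] [TopologicalSpace Y] [T2Space Y] (hY : #Y ≤ 𝔠) :
    #C(X, Y) ≤ 𝔠 := by
  obtain ⟨s, hs, hsd⟩ := TopologicalSpace.exists_countable_dense X
  have hinj : Function.Injective fun (f : C(X, Y)) (a : s) => f a := fun f g hfg =>
    ContinuousMap.ext fun _ => congrFun (f.continuous.ext_on hsd g.continuous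
      fun a ha => congrFun hfg ⟨a, ha⟩) _
  calc #C(X, Y) ≤ #(s → Y) := mk_le_of_injective hinj
    _ = #Y ^ #s := by rw [power_def]
    _ ≤ 𝔠 ^ #s := power_le_power_right hY
    _ ≤ 𝔠 ^ ℵ₀ := power_le_power_left continuum_ne_zero hs.le_aleph0
    _ = 𝔠 := continuum_power_aleph0

theorem exists_surjOn_ball_of_mk_le {𝕜 J : Type u} [NontriviallyNormedField 𝕜] (hJ : #J ≤ #𝕜)
    (j₀ : J) : ∃ e : 𝕜 → J, e 1 = j₀ ∧ Set.SurjOn e (ball 0 1) Set.univ := by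
  rw [← cardinal_eq_of_mem_nhds 𝕜 (ball_mem_nhds (0 : 𝕜) one_pos)] at hJ
  obtain ⟨φ⟩ := hJ
  refine ⟨Function.extend (fun j => (φ j : 𝕜)) id fun _ => j₀, ?_, fun j _ => ⟨φ j, (φ j).2, ?_⟩⟩
  · refine Function.extend_apply' _ _ _ ?_
    rintro ⟨j, hj⟩
    simpa [hj] using (φ j).2
  · exact (Subtype.val_injective.comp φ.injective).extend_apply _ _ j

theorem mk_le_mk_fst_fiber {α J : Type u} {κ : Type*} {e : α → κ × J} {s : Set α}
    (he : Set.SurjOn e s Set.univ) (k : κ) : #J ≤ #{a ∈ s | (e a).1 = k} := by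
  choose a has ha using fun j => he (Set.mem_univ (k, j))
  refine mk_le_of_injective (f := fun j => ⟨a j, has j, congrArg Prod.fst (ha j)⟩) fun i j hij => ?_
  have := congrArg (fun b => (e b.1).2) hij
  simpa [ha] using this

end Cardinality

section LinearIndependence

theorem span_image_inf_span_image {ι R M : Type*} [Semiring R] [AddCommMonoid M] [Module R M]
    {v : ι → M} (hv : LinearIndependent R v) (s t : Set ι) :
    Submodule.span R (v '' s) ⊓ Submodule.span R (v '' t) = Submodule.span R (v '' (s ∩ t)) := by
  simp only [Finsupp.span_image_eq_map_linearCombination]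
  rw [Finsupp.supported_inter, Submodule.map_inf _ hv]

theorem rank_span_image {ι M : Type u} {R : Type*} [Semiring R] [StrongRankCondition R]
    [AddCommMonoid M] [Module R M] {v : ι → M} (hv : LinearIndependent R v) (s : Set ι) :
    Module.rank R (Submodule.span R (v '' s)) = #s := by
  have := nontrivial_of_invariantBasisNumber R
  rw [rank_span_set (hv.linearIndepOn s).id_image, mk_image_eq hv.injective]

theorem linearIndependent_geometric (R : Type*) [CommRing R] [IsDomain R] :
    LinearIndependent R fun (t : R) (j : ℕ) => t ^ j :=
  (linearIndependent_monoidHom (Multiplicative ℕ) R).comp _ (powersHom R).injective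

theorem linearCombination_eventuallyEq_smul {ι α β R M : Type*} [Semiring R] [AddCommMonoid M]
    [Module R M] {l : Filter α} {v : ι → α → M} {a : ι → β → R} {σ : α → β} {x : α → M}
    (hv : ∀ i, v i =ᶠ[l] fun n => a i (σ n) • x n) (c : ι →₀ R) :
    Finsupp.linearCombination R v c =ᶠ[l]
      fun n => Finsupp.linearCombination R a c (σ n) • x n := by
  filter_upwards [(eventually_all_finset c.support).2 fun i _ => hv i] with n hn
  simp only [Finsupp.linearCombination_apply, Finsupp.sum, Finset.sum_apply, Pi.smul_apply,
    Finset.sum_smul, smul_eq_mul, mul_smul]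
  exact Finset.sum_congr rfl fun i hi => by rw [hn i hi]

end LinearIndependence

section Sequences

theorem dense_of_forall_exists_eq_of_lt {Y : Type*} [TopologicalSpace Y] {s : Set (ℕ → Y)}
    (h : ∀ (F : ℕ → Y) (N : ℕ), ∃ G ∈ s, ∀ n < N, G n = F n) : Dense s := by
  intro F
  choose G hGs hGF using h F
  refine mem_closure_of_tendsto (f := G) (b := atTop) (tendsto_pi_nhds.2 fun n => ?_)
    (Eventually.of_forall hGs)
  refine tendsto_const_nhds.congr' ?_
  filter_upwards [eventually_gt_atTop n] with N hN
  exact (hGF N n hN).symm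

theorem exists_forall_frequently_eq_and {P : ℕ → Prop} (hP : ∃ᶠ n in atTop, P n) :
    ∃ σ : ℕ → ℕ, ∀ j, ∃ᶠ n in atTop, σ n = j ∧ P n := by
  obtain ⟨φ, hφ, hPφ⟩ := extraction_of_frequently_atTop hP
  refine ⟨fun n => (Nat.unpair (Function.invFun φ n)).1, fun j => frequently_atTop.2 fun N => ?_⟩
  refine ⟨φ (Nat.pair j N), (Nat.right_le_pair j N).trans hφ.le_apply, ?_, hPφ _⟩
  simp only [Function.leftInverse_invFun hφ.injective _, Nat.unpair_pair]

theorem exists_forall_not_tendsto_fiber {Y : Type*} {u : ℕ → Y} {l : Filter Y}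
    (hu : ¬Tendsto u atTop l) :
    ∃ σ : ℕ → ℕ, ∀ j, ¬Tendsto u (atTop ⊓ 𝓟 (σ ⁻¹' {j})) l := by
  obtain ⟨U, hU, hfreq⟩ := not_tendsto_iff_exists_frequently_notMem.1 hu
  obtain ⟨σ, hσ⟩ := exists_forall_frequently_eq_and hfreq
  refine ⟨σ, fun j => not_tendsto_iff_exists_frequently_notMem.2 ⟨U, hU, ?_⟩⟩
  exact frequently_inf_principal.2 (hσ j)

end Sequences

section NullSequences

/-! `AddCommMonoid E` rather than `AddCommGroup E` is assumed below because for `E = Hol Ω` the two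
paths to the additive structure are too expensive to unify; subtraction comes for free from
`Module 𝕜 E`. -/

variable {𝕜 E α : Type*} [AddCommMonoid E] [TopologicalSpace E] {l : Filter α}

theorem tendsto_smul_zero_of_norm_le_one [NontriviallyNormedField 𝕜] [Module 𝕜 E]
    [ContinuousSMul 𝕜 E] {a : α → 𝕜} {x : α → E} (ha : ∀ n, ‖a n‖ ≤ 1)
    (hx : Tendsto x l (𝓝 0)) : Tendsto (fun n => a n • x n) l (𝓝 0) := by
  let _ : AddCommGroup E := Module.addCommMonoidToAddCommGroup 𝕜
  refine (nhds_basis_balanced 𝕜 E).tendsto_right_iff.2 fun U hU => ?_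
  filter_upwards [hx hU.1] with n hn
  exact hU.2.smul_mem (ha n) hn

theorem tendsto_zero_of_mem_span [Semiring 𝕜] [Module 𝕜 E] [ContinuousAdd E]
    [ContinuousConstSMul 𝕜 E] {s : Set (α → E)} (hs : ∀ y ∈ s, Tendsto y l (𝓝 0)) {y : α → E}
    (hy : y ∈ Submodule.span 𝕜 s) : Tendsto y l (𝓝 0) := by
  induction hy using Submodule.span_induction with
  | mem y hy => exact hs y hy
  | zero => exact tendsto_const_nhds
  | add y z _ _ hy hz => exact (add_zero (0 : E)) ▸ hy.add hz
  | smul c y _ hy => exact (smul_zero (A := E) c) ▸ hy.const_smul c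

end NullSequences

section Witnesses

/-- A set `A` in a topological vector space is *infinitely pointwise `κ`-dense-lineable* if through
each of its points pass countably many dense `κ`-dimensional subspaces which are contained in
`A ∪ {0}` and any two of which meet only in the line spanned by that point. -/
def IsInfinitelyPointwiseDenseLineable (𝕜 : Type*) {V : Type*} [Semiring 𝕜] [AddCommMonoid V]
    [Module 𝕜 V] [TopologicalSpace V] (κ : Cardinal) (A : Set V) : Prop :=
  ∀ x ∈ A, ∃ W : ℕ → Submodule 𝕜 V,
    (∀ k, Dense (W k : Set V)) ∧
    (∀ k, Module.rank 𝕜 (W k) = κ) ∧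
    (∀ k, x ∈ W k) ∧
    (∀ k, (W k : Set V) ⊆ A ∪ {0}) ∧
    (∀ k n, k ≠ n → W k ⊓ W n = Submodule.span 𝕜 {x})

/-- The null sequences which `T` does not map to null sequences, i.e. those witnessing that `T` is
not sequentially continuous at `0`. -/
def discontinuityWitnesses {E F : Type*} [Zero E] [TopologicalSpace E] [Zero F]
    [TopologicalSpace F] (T : E → F) : Set (ℕ → E) :=
  {x | Tendsto x atTop (𝓝 0) ∧ ¬Tendsto (T ∘ x) atTop (𝓝 0)}

theorem eq_zero_of_tendsto_map_linearCombination {ι α β 𝕜 E F : Type*} [Field 𝕜] [AddCommMonoid E]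
    [Module 𝕜 E] [AddCommMonoid F] [Module 𝕜 F] [TopologicalSpace F] [ContinuousConstSMul 𝕜 F]
    {T : E →ₗ[𝕜] F} {l : Filter α} {a : ι → β → 𝕜} (ha : LinearIndependent 𝕜 a) {σ : α → β}
    {x : α → E} {v : ι → α → E} (hv : ∀ i, v i =ᶠ[l] fun n => a i (σ n) • x n)
    (hσ : ∀ j, ¬Tendsto (T ∘ x) (l ⊓ 𝓟 (σ ⁻¹' {j})) (𝓝 0)) {c : ι →₀ 𝕜}
    (hc : Tendsto (T ∘ Finsupp.linearCombination 𝕜 v c) l (𝓝 0)) : c = 0 := by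
  refine linearIndependent_iff.1 ha c (funext fun j => ?_)
  by_contra hj
  refine hσ j ((tendsto_const_smul_iff₀ hj).1 ?_)
  rw [smul_zero]
  refine (hc.mono_left inf_le_left).congr' ?_
  filter_upwards [(linearCombination_eventuallyEq_smul hv c).filter_mono inf_le_left,
    mem_inf_of_right (mem_principal_self _)] with n hn hnj
  rw [Function.comp_apply, hn, map_smul, hnj, Function.comp_apply]

theorem span_image_subset_discontinuityWitnesses {ι 𝕜 E F : Type*} [Semiring 𝕜] [AddCommMonoid E]
    [Module 𝕜 E] [TopologicalSpace E] [ContinuousAdd E] [ContinuousConstSMul 𝕜 E] [Zero F]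
    [TopologicalSpace F] {T : E → F} {v : ι → ℕ → E} {s : Set ι}
    (hnull : ∀ i ∈ s, Tendsto (v i) atTop (𝓝 0))
    (hT : ∀ c, Tendsto (T ∘ Finsupp.linearCombination 𝕜 v c) atTop (𝓝 0) → c = 0) :
    (Submodule.span 𝕜 (v '' s) : Set (ℕ → E)) ⊆ discontinuityWitnesses T ∪ {0} := by
  intro y hy
  have hy_null := tendsto_zero_of_mem_span (Set.forall_mem_image.2 hnull) hy
  obtain ⟨c, -, rfl⟩ := (Finsupp.mem_span_image_iff_linearCombination 𝕜).1 hy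
  by_cases hc : Tendsto (T ∘ Finsupp.linearCombination 𝕜 v c) atTop (𝓝 0)
  · exact Or.inr (by rw [hT c hc, map_zero, Set.mem_singleton_iff])
  · exact Or.inl ⟨hy_null, hc⟩

end Witnesses

section Perturbation

/-- The sequence with initial segment `p.1 0, …, p.1 (p.2 - 1)` followed by the terms
`t ^ σ n • x n`, so that `x` is perturbed by a geometric progression along the fibres of `σ`. -/
def perturbation {𝕜 E : Type*} [Monoid 𝕜] [SMul 𝕜 E] (x : ℕ → E) (σ : ℕ → ℕ)
    (p : (ℕ → E) × ℕ) (t : 𝕜) : ℕ → E :=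
  fun n => if n < p.2 then p.1 n else t ^ σ n • x n

/-- The parameters generating the `k`-th subspace: those in the open unit ball to which `e` gives
the label `k`, and the common parameter `1`, which reproduces the given sequence. -/
def branch {𝕜 J : Type*} [NormedField 𝕜] (e : 𝕜 → ℕ × J) (k : ℕ) : Set 𝕜 :=
  insert 1 {t ∈ ball 0 1 | (e t).1 = k}

theorem branch_inter_branch {𝕜 J : Type*} [NormedField 𝕜] (e : 𝕜 → ℕ × J) {k n : ℕ} (h : k ≠ n) :
    branch e k ∩ branch e n = {1} := by
  rw [branch, branch, ← Set.insert_inter_distrib]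
  refine (congrArg _ (Set.eq_empty_of_forall_notMem ?_)).trans (insert_empty_eq 1)
  rintro t ⟨⟨-, rfl⟩, -, hn⟩
  exact h hn

theorem norm_le_one_of_mem_branch {𝕜 J : Type*} [NormedField 𝕜] {e : 𝕜 → ℕ × J} {k : ℕ} {t : 𝕜}
    (ht : t ∈ branch e k) : ‖t‖ ≤ 1 := by
  rcases ht with rfl | ⟨ht, -⟩
  · exact norm_one.le
  · exact (mem_ball_zero_iff.1 ht).le

theorem mk_branch {𝕜 J : Type u} [NormedField 𝕜] {e : 𝕜 → ℕ × J}
    (he : Set.SurjOn e (ball 0 1) Set.univ) (hJ : #𝕜 ≤ #J) (k : ℕ) : #(branch e k) = #𝕜 :=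
  (mk_set_le _).antisymm <| calc
    #𝕜 ≤ #J := hJ
    _ ≤ #{t ∈ ball (0 : 𝕜) 1 | (e t).1 = k} := mk_le_mk_fst_fiber he k
    _ ≤ #(branch e k) := mk_le_mk_of_subset (Set.subset_insert _ _)

theorem perturbation_eventuallyEq {𝕜 E : Type*} [Monoid 𝕜] [SMul 𝕜 E] (x : ℕ → E) (σ : ℕ → ℕ)
    (p : (ℕ → E) × ℕ) (t : 𝕜) : perturbation x σ p t =ᶠ[atTop] fun n => t ^ σ n • x n := by
  filter_upwards [eventually_ge_atTop p.2] with n hn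
  exact if_neg hn.not_gt

theorem perturbation_one {𝕜 E : Type*} [Monoid 𝕜] [MulAction 𝕜 E] (x F : ℕ → E) (σ : ℕ → ℕ) :
    perturbation x σ (F, 0) (1 : 𝕜) = x := by
  funext n
  simp [perturbation]

theorem tendsto_perturbation_zero {𝕜 E : Type*} [NontriviallyNormedField 𝕜] [AddCommMonoid E]
    [Module 𝕜 E] [TopologicalSpace E] [ContinuousSMul 𝕜 E] {x : ℕ → E}
    (hx : Tendsto x atTop (𝓝 0)) (σ : ℕ → ℕ) (p : (ℕ → E) × ℕ) {t : 𝕜} (ht : ‖t‖ ≤ 1) :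
    Tendsto (perturbation x σ p t) atTop (𝓝 0) := by
  refine (tendsto_smul_zero_of_norm_le_one (fun n => ?_) hx).congr'
    (perturbation_eventuallyEq x σ p t).symm
  rw [norm_pow]
  exact pow_le_one₀ (norm_nonneg t) ht

theorem dense_perturbation_branch {𝕜 E : Type*} [NormedField 𝕜] [SMul 𝕜 E] [TopologicalSpace E]
    {e : 𝕜 → ℕ × (ℕ → E) × ℕ} (he : Set.SurjOn e (ball 0 1) Set.univ) (x : ℕ → E) (σ : ℕ → ℕ)
    (k : ℕ) : Dense ((fun t => perturbation x σ (e t).2 t) '' branch e k) := by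
  refine dense_of_forall_exists_eq_of_lt fun F N => ?_
  obtain ⟨t, ht, het⟩ := he (Set.mem_univ (k, F, N))
  refine ⟨_, Set.mem_image_of_mem _ (Or.inr ⟨ht, congrArg Prod.fst het⟩), fun n hn => ?_⟩
  simp only [het, perturbation, if_pos hn]

theorem exists_index_surjOn_ball {𝕜 V : Type u} [NontriviallyNormedField 𝕜] (hV : #V ≤ #𝕜)
    (v : V) : ∃ e : 𝕜 → ℕ × V × ℕ, e 1 = (0, v, 0) ∧ Set.SurjOn e (ball 0 1) Set.univ := by
  have := NontriviallyNormedField.infinite 𝕜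
  refine exists_surjOn_ball_of_mk_le ?_ _
  calc #(ℕ × V × ℕ) = ℵ₀ * (#V * ℵ₀) := by simp
    _ ≤ #𝕜 * (#𝕜 * #𝕜) := by gcongr <;> exact aleph0_le_mk 𝕜
    _ = #𝕜 := by simp only [mul_eq_self (aleph0_le_mk 𝕜)]

end Perturbation

theorem Suc_diff_Su_infinitely_pointwise_continuum_dense_lineable_general {𝕜 E : Type u} {F : Type*}
    [NontriviallyNormedField 𝕜] [AddCommMonoid E] [Module 𝕜 E] [TopologicalSpace E]
    [ContinuousAdd E] [ContinuousSMul 𝕜 E] [AddCommMonoid F] [Module 𝕜 F] [TopologicalSpace F]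
    [ContinuousConstSMul 𝕜 F] (T : E →ₗ[𝕜] F) (hE : #(ℕ → E) ≤ #𝕜) :
    IsInfinitelyPointwiseDenseLineable 𝕜 #𝕜 (discontinuityWitnesses T) := by
  let _ : AddCommGroup E := Module.addCommMonoidToAddCommGroup 𝕜
  rintro x ⟨hx, hTx⟩
  obtain ⟨σ, hσ⟩ := exists_forall_not_tendsto_fiber hTx
  obtain ⟨e, he_one, he⟩ := exists_index_surjOn_ball hE x
  let v : 𝕜 → ℕ → E := fun t => perturbation x σ (e t).2 t
  have hv_one : v 1 = x := by simp only [v, he_one, perturbation_one]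
  have hv_indep_mod : ∀ c, Tendsto (T ∘ Finsupp.linearCombination 𝕜 v c) atTop (𝓝 0) → c = 0 :=
    fun _ => eq_zero_of_tendsto_map_linearCombination (linearIndependent_geometric 𝕜)
      (fun t => perturbation_eventuallyEq x σ (e t).2 t) hσ
  have hv : LinearIndependent 𝕜 v := linearIndependent_iff.2 fun c hc =>
    hv_indep_mod c (by simpa [hc, Function.comp_def] using tendsto_const_nhds)
  have hx_ne : x ≠ 0 := hv_one ▸ hv.ne_zero 1
  have hcard : #𝕜 ≤ #((ℕ → E) × ℕ) := mk_le_of_injective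
    (Function.Injective.comp (Prod.mk_left_injective 0) (smul_left_injective 𝕜 hx_ne))
  refine ⟨fun k => Submodule.span 𝕜 (v '' branch e k), fun k => ?_, fun k => ?_, fun k => ?_,
    fun k => ?_, fun k n hkn => ?_⟩
  · exact (dense_perturbation_branch he x σ k).mono Submodule.subset_span
  · rw [rank_span_image hv, mk_branch he hcard]
  · exact Submodule.subset_span ⟨1, Set.mem_insert _ _, hv_one⟩
  · exact span_image_subset_discontinuityWitnesses (fun t ht =>
      tendsto_perturbation_zero hx σ _ (norm_le_one_of_mem_branch ht)) hv_indep_mod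
  · rw [span_image_inf_span_image hv, branch_inter_branch e hkn, Set.image_singleton, hv_one]

section HolomorphicSequences

/-- The inclusion of the holomorphic functions into the space of all functions on `Ω` with the
topology of uniform convergence on `Ω`. -/
noncomputable def holToUniformFun (Ω : Set ℂ) : Hol Ω →ₗ[ℂ] UniformFun Ω ℂ where
  toFun f := UniformFun.ofFun (f : C(Ω, ℂ))
  map_add' _ _ := rfl
  map_smul' _ _ := rfl

theorem mem_Suc_iff_tendsto {Ω : Set ℂ} {x : HSeq Ω} : x ∈ Suc Ω ↔ Tendsto x atTop (𝓝 0) := by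
  rw [tendsto_subtype_rng, ContinuousMap.tendsto_iff_forall_isCompact_tendstoUniformlyOn]
  rfl

theorem mem_Su_iff_tendsto {Ω : Set ℂ} {x : HSeq Ω} :
    x ∈ Su Ω ↔ Tendsto (holToUniformFun Ω ∘ x) atTop (𝓝 0) := by
  rw [UniformFun.tendsto_iff_tendstoUniformly]
  rfl

instance (Ω : Set ℂ) : ContinuousAdd (Hol Ω) :=
  (Hol Ω).toSubsemiring.toAddSubmonoid.continuousAdd

theorem Suc_diff_Su_eq_discontinuityWitnesses (Ω : Set ℂ) :
    Suc Ω \ Su Ω = discontinuityWitnesses (holToUniformFun Ω) :=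
  Set.ext fun _ => and_congr mem_Suc_iff_tendsto mem_Su_iff_tendsto.not

theorem mk_HSeq_le_continuum (Ω : Set ℂ) : #(HSeq Ω) ≤ 𝔠 := by
  have hHol : #(Hol Ω) ≤ 𝔠 :=
    (mk_subtype_le _).trans (mk_continuousMap_le_continuum mk_complex.le)
  calc #(HSeq Ω) = #(Hol Ω) ^ ℵ₀ := by simp
    _ ≤ 𝔠 ^ ℵ₀ := power_le_power_right hHol
    _ = 𝔠 := continuum_power_aleph0

end HolomorphicSequences

/-- `S_uc \ S_u` is infinitely pointwise `𝔠`-dense-lineable in `H(Ω)^ℕ`. -/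
theorem Suc_diff_Su_infinitely_pointwise_continuum_dense_lineable
    (Ω : Set ℂ) (hΩ : IsOpen Ω) (hne : Ω.Nonempty) :
    ∀ x ∈ Suc Ω \ Su Ω, ∃ W : ℕ → Submodule ℂ (HSeq Ω),
      (∀ k, Dense (W k : Set (HSeq Ω))) ∧
      (∀ k, Module.rank ℂ (W k) = Cardinal.continuum) ∧
      (∀ k, x ∈ W k) ∧
      (∀ k, (W k : Set (HSeq Ω)) ⊆ (Suc Ω \ Su Ω) ∪ {0}) ∧
      (∀ k n, k ≠ n → W k ⊓ W n = Submodule.span ℂ {x}) := by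
  rw [Suc_diff_Su_eq_discontinuityWitnesses, ← mk_complex]
  exact Suc_diff_Su_infinitely_pointwise_continuum_dense_lineable_general (holToUniformFun Ω)
    ((mk_HSeq_le_continuum Ω).trans mk_complex.ge)
end

section
/- Let Ω be a nonempty open subset of ℂ. Then the set S_p \ S_uc is spaceable in H(Ω)^ℕ: there exists a closed infinite-dimensional vector subspace M of H(Ω)^ℕ such that M \ {0} ⊆ S_p \ S_uc. -/
open Filter Topology

set_option synthInstance.maxHeartbeats 1000000
set_option maxHeartbeats 1000000

/-!
Fix `z₀ ∈ Ω`. Approximating `1 / (aₙ - z)` by polynomials on large discs with a thin horizontal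
strip around `aₙ` removed gives polynomials `pₙ` which tend to `0` pointwise, whereas `pₙ(aₙ) = 1`
along a sequence `aₙ → z₀`; one may take `p₀ = 1`. Let `M` consist of the sequences `(h pₙ)`, where
`h` is holomorphic on `Ω` and supported on the component of `z₀`. As `h` is the `0`-th term of
`(h pₙ)`, the map `h ↦ (h pₙ)` is a closed embedding. If `h ≠ 0` and `h pₙ → 0` locally uniformly,
then `pₙ → 0` uniformly on a small circle about `z₀` on which `h` has no zeros, hence on the disc it
bounds by the maximum principle, which contradicts `pₙ(aₙ) = 1`.
-/

open Bornology Metric Polynomial Set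

section PolynomialApproximation

variable {𝕜 : Type*} [NontriviallyNormedField 𝕜] [CompleteSpace 𝕜]

theorem exists_mem_closure_polynomialFunctions_sub_mul_eq_one {K : Set 𝕜} [CompactSpace K] {a : 𝕜}
    (ha : ¬ IsBounded (connectedComponentIn Kᶜ a)) :
    ∃ g ∈ closure (polynomialFunctions K : Set C(K, 𝕜)), ∀ z : K, (a - z) * g z = 1 := by
  let S : Subalgebra 𝕜 C(K, 𝕜) := (polynomialFunctions K).topologicalClosure
  have hS : IsClosed (S : Set C(K, 𝕜)) := Subalgebra.isClosed_topologicalClosure _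
  let x : S :=
    ⟨(X : 𝕜[X]).toContinuousMapOn K, Subalgebra.le_topologicalClosure _ ⟨X, trivial, rfl⟩⟩
  have spectrum_x : spectrum 𝕜 (x : C(K, 𝕜)) = K := by
    rw [ContinuousMap.spectrum_eq_range]
    ext z
    simp [x]
  have a_notMem : a ∉ spectrum 𝕜 x := fun h =>
    ha (spectrum_x ▸ Subalgebra.spectrum_isBounded_connectedComponentIn S x h)
  obtain ⟨g, hg⟩ := (spectrum.notMem_iff.mp a_notMem).exists_right_inv
  refine ⟨g, g.2, fun z => ?_⟩
  simpa [x] using congrArg (fun s : S => (s : C(K, 𝕜)) z) hg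

theorem exists_polynomial_eval_eq_one_norm_lt {K : Set 𝕜} (hK : IsCompact K) {a : 𝕜}
    (ha : ¬ IsBounded (connectedComponentIn Kᶜ a)) {ε : ℝ} (hε : 0 < ε) :
    ∃ p : 𝕜[X], p.eval a = 1 ∧ ∀ z ∈ K, ‖p.eval z‖ < ε := by
  have : CompactSpace K := isCompact_iff_compactSpace.mp hK
  obtain ⟨g, hg, hag⟩ := exists_mem_closure_polynomialFunctions_sub_mul_eq_one ha
  let φ (u : C(K, 𝕜)) : C(K, 𝕜) := 1 - (C a - X : 𝕜[X]).toContinuousMapOn K * u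
  have hφg : φ g = 0 := by
    ext z
    simp [φ, hag]
  have zero_mem : 0 ∈ closure {u | ∃ p : 𝕜[X], p.eval a = 1 ∧ p.toContinuousMapOn K = u} := by
    rw [← hφg]
    refine map_mem_closure (by fun_prop) hg ?_
    rintro _ ⟨q, -, rfl⟩
    exact ⟨1 - (C a - X) * q, by simp, by ext; simp [φ]⟩
  obtain ⟨_, ⟨p, hpa, rfl⟩, hp⟩ := Metric.mem_closure_iff.mp zero_mem ε hε
  rw [dist_zero_left] at hp
  exact ⟨p, hpa, fun z hz => (ContinuousMap.norm_coe_le_norm _ (⟨z, hz⟩ : K)).trans_lt hp⟩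

theorem exists_polynomial_seq_eval_eq_one_tendsto_zero {K : ℕ → Set 𝕜} (hK : ∀ n, IsCompact (K n))
    {a : ℕ → 𝕜} (ha : ∀ n, ¬ IsBounded (connectedComponentIn (K n)ᶜ (a n))) :
    ∃ p : ℕ → 𝕜[X], (∀ n, (p n).eval (a n) = 1) ∧
      ∀ z, (∀ᶠ n in atTop, z ∈ K n) → Tendsto (fun n => (p n).eval z) atTop (𝓝 0) := by
  choose p hpa hpK using fun n : ℕ =>
    exists_polynomial_eval_eq_one_norm_lt (hK n) (ha n) (Nat.one_div_pos_of_nat (n := n) (α := ℝ))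
  refine ⟨p, hpa, fun z hz => squeeze_zero_norm' ?_ tendsto_one_div_add_atTop_nhds_zero_nat⟩
  exact hz.mono fun n hn => (hpK n z hn).le

end PolynomialApproximation

section HorizontalStrips

theorem not_isBounded_im_preimage {s : Set ℝ} (hs : s.Nonempty) :
    ¬ IsBounded (Complex.im ⁻¹' s) := by
  obtain ⟨y, hy⟩ := hs
  intro hb
  refine NormedSpace.unbounded_univ ℝ ℝ
    ((Complex.reCLM.lipschitz.isBounded_image hb).subset fun x _ => ?_)
  exact ⟨⟨x, y⟩, hy, rfl⟩

theorem not_isBounded_connectedComponentIn_compl_sdiff_im_preimage {s : Set ℝ} (hs : Convex ℝ s)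
    (K : Set ℂ) {a : ℂ} (ha : a.im ∈ s) :
    ¬ IsBounded (connectedComponentIn (K \ Complex.im ⁻¹' s)ᶜ a) := fun hb =>
  not_isBounded_im_preimage ⟨_, ha⟩ <| hb.subset <|
    (hs.linear_preimage Complex.imLm).isPreconnected.subset_connectedComponentIn ha
      fun _ hz hzK => hzK.2 hz

theorem exists_polynomial_seq_tendsto_zero_eval_eq_one_of_tendsto_im {t : ℝ} {a : ℕ → ℂ}
    (ha : ∀ n, t < (a n).im) (hlim : Tendsto (fun n => (a n).im) atTop (𝓝 t)) :
    ∃ p : ℕ → ℂ[X], (∀ n, (p n).eval (a n) = 1) ∧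
      ∀ z, Tendsto (fun n => (p n).eval z) atTop (𝓝 0) := by
  let V (n : ℕ) : Set ℝ := Ioo t ((a n).im + ((a n).im - t))
  obtain ⟨p, hpa, hp⟩ := exists_polynomial_seq_eval_eq_one_tendsto_zero
    (K := fun n => closedBall 0 n \ Complex.im ⁻¹' V n) (a := a)
    (fun n => (isCompact_closedBall _ _).diff (isOpen_Ioo.preimage Complex.continuous_im))
    (fun n => not_isBounded_connectedComponentIn_compl_sdiff_im_preimage (convex_Ioo _ _) _
      ⟨ha n, by linarith [ha n]⟩)
  refine ⟨p, hpa, fun z => hp z ?_⟩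
  have mem_closedBall_eventually : ∀ᶠ n : ℕ in atTop, z ∈ closedBall 0 (n : ℝ) := by
    simpa using tendsto_natCast_atTop_atTop.eventually_ge_atTop ‖z‖
  have notMem_strip_eventually : ∀ᶠ n in atTop, z.im ∉ V n := by
    rcases le_or_gt z.im t with hz | hz
    · exact .of_forall fun n hn => hz.not_gt hn.1
    · have hV : Tendsto (fun n => (a n).im + ((a n).im - t)) atTop (𝓝 t) := by
        simpa using hlim.add (hlim.sub_const t)
      exact (hV.eventually_lt_const hz).mono fun n hn hzn => hzn.2.not_gt hn
  exact mem_closedBall_eventually.and notMem_strip_eventually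

theorem exists_polynomial_seq_tendsto_zero_not_tendstoUniformlyOn (z₀ : ℂ) :
    ∃ p : ℕ → ℂ[X], p 0 = 1 ∧ (∀ z, Tendsto (fun n => (p n).eval z) atTop (𝓝 0)) ∧
      ∀ s ∈ 𝓝 z₀, ¬ TendstoUniformlyOn (fun n z => (p n).eval z) 0 atTop s := by
  obtain ⟨a, ha, ha_lim⟩ : ∃ a : ℕ → ℂ, (∀ n, z₀.im < (a n).im) ∧ Tendsto a atTop (𝓝 z₀) := by
    refine mem_closure_iff_seq_limit.mp (?_ : z₀ ∈ closure {z | z₀.im < z.im})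
    simp [Complex.closure_setOfPred_lt_im]
  obtain ⟨q, hqa, hq⟩ := exists_polynomial_seq_tendsto_zero_eval_eq_one_of_tendsto_im ha
    ((Complex.continuous_im.tendsto z₀).comp ha_lim)
  have update_eq : ∀ᶠ n in atTop, Function.update q 0 1 n = q n :=
    (eventually_ne_atTop 0).mono fun n hn => Function.update_of_ne hn 1 q
  refine ⟨Function.update q 0 1, Function.update_self .., fun z => ?_, fun s hs hunif => ?_⟩
  · exact (hq z).congr' (update_eq.mono fun n hn => congrArg (eval z) hn.symm)
  · obtain ⟨n, hn, has, hsmall⟩ := (update_eq.and ((ha_lim.eventually_mem hs).and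
      (Metric.tendstoUniformlyOn_iff.mp hunif 1 one_pos))).exists
    simpa [hn, hqa] using hsmall (a n) has

end HorizontalStrips

section UniformConvergence

variable {ι : Type*} {l : Filter ι}

theorem tendstoUniformlyOn_closure_of_frontier {E F : Type*} [NormedAddCommGroup E]
    [NormedSpace ℂ E] [Nontrivial E] [NormedAddCommGroup F] [NormedSpace ℂ F] {U : Set E}
    (hU : IsBounded U) {f : ι → E → F} {g : E → F} (hf : ∀ i, DiffContOnCl ℂ (f i) U)
    (hg : DiffContOnCl ℂ g U) (h : TendstoUniformlyOn f g l (frontier U)) :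
    TendstoUniformlyOn f g l (closure U) := by
  rw [Metric.tendstoUniformlyOn_iff] at h ⊢
  intro ε hε
  filter_upwards [h (ε / 2) (half_pos hε)] with i hi z hz
  simp only [dist_eq_norm] at hi ⊢
  exact (Complex.norm_le_of_forall_mem_frontier_norm_le hU (hg.sub (hf i))
    (fun w hw => (hi w hw).le) hz).trans_lt (half_lt_self hε)

theorem tendstoUniformlyOn_zero_of_mul_of_le_norm {α R : Type*} [NormedRing R] [NormMulClass R]
    {s : Set α} {f : ι → α → R} {h : α → R} {c : ℝ} (hc : 0 < c) (hch : ∀ x ∈ s, c ≤ ‖h x‖)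
    (hf : TendstoUniformlyOn (fun i x => f i x * h x) 0 l s) : TendstoUniformlyOn f 0 l s := by
  rw [Metric.tendstoUniformlyOn_iff] at hf ⊢
  intro ε hε
  filter_upwards [hf (ε * c) (mul_pos hε hc)] with i hi x hx
  have hix := hi x hx
  simp only [Pi.zero_apply, dist_zero_left, norm_mul] at hix ⊢
  refine lt_of_mul_lt_mul_right ?_ hc.le
  calc ‖f i x‖ * c ≤ ‖f i x‖ * ‖h x‖ := by gcongr; exact hch x hx
    _ < ε * c := hix

theorem exists_closedBall_subset_forall_mem_sphere_ne_zero {h : ℂ → ℂ} {z₀ : ℂ}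
    (hh : AnalyticAt ℂ h z₀) (h0 : ¬ ∀ᶠ z in 𝓝 z₀, h z = 0) {s : Set ℂ} (hs : s ∈ 𝓝 z₀) :
    ∃ r > 0, closedBall z₀ r ⊆ s ∧ ∀ z ∈ sphere z₀ r, h z ≠ 0 := by
  have hne : ∀ᶠ z in 𝓝 z₀, z ≠ z₀ → h z ≠ 0 :=
    eventually_nhdsWithin_iff.mp (hh.eventually_eq_zero_or_eventually_ne_zero.resolve_left h0)
  obtain ⟨r, hr, hball⟩ := Metric.nhds_basis_closedBall.mem_iff.mp (inter_mem hs hne)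
  exact ⟨r, hr, hball.trans inter_subset_left, fun z hz =>
    (hball (sphere_subset_closedBall hz)).2 (ne_of_mem_sphere hz hr.ne')⟩

theorem exists_mem_nhds_tendstoUniformlyOn_zero_of_mul {z₀ : ℂ} {s : Set ℂ} (hs : s ∈ 𝓝 z₀)
    {f : ι → ℂ → ℂ} (hf : ∀ i, DifferentiableOn ℂ (f i) s) {h : ℂ → ℂ}
    (hh : DifferentiableOn ℂ h s) (h0 : ¬ ∀ᶠ z in 𝓝 z₀, h z = 0)
    (hfh : TendstoUniformlyOn (fun i z => f i z * h z) 0 l s) :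
    ∃ t ∈ 𝓝 z₀, TendstoUniformlyOn f 0 l t := by
  obtain ⟨r, hr, hrs, hne⟩ :=
    exists_closedBall_subset_forall_mem_sphere_ne_zero (hh.analyticAt hs) h0 hs
  have sphere_subset : sphere z₀ r ⊆ s := sphere_subset_closedBall.trans hrs
  obtain ⟨c, hc, hch⟩ := (isCompact_sphere z₀ r).exists_forall_le'
    (hh.continuousOn.mono sphere_subset).norm fun z hz => norm_pos_iff.mpr (hne z hz)
  have hsphere : TendstoUniformlyOn f 0 l (sphere z₀ r) :=
    tendstoUniformlyOn_zero_of_mul_of_le_norm hc hch (hfh.mono sphere_subset)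
  refine ⟨closedBall z₀ r, closedBall_mem_nhds z₀ hr, ?_⟩
  rw [← closure_ball z₀ hr.ne']
  refine tendstoUniformlyOn_closure_of_frontier isBounded_ball
    (fun i => (hf i).diffContOnCl_ball hrs) diffContOnCl_const ?_
  rwa [frontier_ball z₀ hr.ne']

end UniformConvergence

section Components

theorem isOpen_sdiff_connectedComponentIn {α : Type*} [TopologicalSpace α]
    [LocallyConnectedSpace α] {s : Set α} (hs : IsOpen s) (x : α) :
    IsOpen (s \ connectedComponentIn s x) := by
  refine isOpen_iff_mem_nhds.mpr fun y hy => ?_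
  filter_upwards [connectedComponentIn_mem_nhds (hs.mem_nhds hy.1)] with w hw
  refine ⟨connectedComponentIn_subset s y hw, fun hwx => hy.2 ?_⟩
  rw [connectedComponentIn_eq hwx, ← connectedComponentIn_eq hw]
  exact mem_connectedComponentIn hy.1

theorem differentiableOn_indicator_of_isOpen {𝕜 E F : Type*} [NontriviallyNormedField 𝕜]
    [NormedAddCommGroup E] [NormedSpace 𝕜 E] [NormedAddCommGroup F] [NormedSpace 𝕜 F]
    {s t : Set E} (ht : IsOpen t) (hst : IsOpen (s \ t)) {f : E → F}
    (hf : DifferentiableOn 𝕜 f t) : DifferentiableOn 𝕜 (t.indicator f) s := by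
  intro x hx
  refine DifferentiableAt.differentiableWithinAt ?_
  by_cases hxt : x ∈ t
  · exact (hf.differentiableAt (ht.mem_nhds hxt)).congr_of_eventuallyEq
      (eqOn_indicator.eventuallyEq_of_mem (ht.mem_nhds hxt))
  · refine (differentiableAt_const 0).congr_of_eventuallyEq ?_
    filter_upwards [hst.mem_nhds ⟨hx, hxt⟩] with y hy
    exact indicator_of_notMem hy.2 f

end Components

namespace Hol

variable {Ω : Set ℂ}

instance [LocallyCompactSpace Ω] : ContinuousMul (Hol Ω) :=
  (Hol Ω).toSubsemiring.toSubmonoid.continuousMul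

/-- The element of `H(Ω)` given by a function on `ℂ` which is holomorphic on `Ω`. -/
def ofDifferentiableOn (g : ℂ → ℂ) (hg : DifferentiableOn ℂ g Ω) : Hol Ω :=
  ⟨⟨Ω.domRestrict g, hg.continuousOn.domRestrict⟩, g, hg, fun _ => rfl⟩

@[simp]
theorem ofDifferentiableOn_apply {g : ℂ → ℂ} (hg : DifferentiableOn ℂ g Ω) (z : Ω) :
    (ofDifferentiableOn g hg : C(Ω, ℂ)) z = g z := rfl

/-- The restriction to `Ω` of polynomials, obtained by substituting the coordinate function. -/
noncomputable def ofPolynomial (Ω : Set ℂ) : ℂ[X] →ₐ[ℂ] Hol Ω :=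
  aeval (ofDifferentiableOn id differentiableOn_id)

@[simp]
theorem ofPolynomial_apply (p : ℂ[X]) (z : Ω) : (ofPolynomial Ω p : C(Ω, ℂ)) z = p.eval ↑z := by
  rw [ofPolynomial, aeval_subalgebra_coe, aeval_continuousMap_apply]; rfl

theorem continuous_eval_const (z : Ω) : Continuous fun f : Hol Ω => (f : C(Ω, ℂ)) z :=
  (ContinuousEvalConst.continuous_eval_const z).comp continuous_subtype_val

/-- The subspace of `H(Ω)` of the functions that vanish outside `C`. -/
def supportedOn (Ω C : Set ℂ) : Submodule ℂ (Hol Ω) where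
  carrier := {h | ∀ z : Ω, (z : ℂ) ∉ C → (h : C(Ω, ℂ)) z = 0}
  add_mem' hf hg z hz := by simp [hf z hz, hg z hz]
  zero_mem' := by simp
  smul_mem' c f hf z hz := by simp [hf z hz]

theorem isClosed_supportedOn (C : Set ℂ) : IsClosed (supportedOn Ω C : Set (Hol Ω)) := by
  change IsClosed {h : Hol Ω | ∀ z : Ω, (z : ℂ) ∉ C → (h : C(Ω, ℂ)) z = 0}
  simp only [ofPred_forall]
  exact isClosed_iInter fun z => isClosed_iInter fun _ =>
    isClosed_eq (continuous_eval_const z) continuous_const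

theorem not_finite_supportedOn {C : Set ℂ} (hC : IsOpen C) (hΩC : IsOpen (Ω \ C))
    (hne : (Ω ∩ C).Infinite) : ¬ Module.Finite ℂ (supportedOn Ω C) := by
  let e : Hol Ω := ofDifferentiableOn (C.indicator 1)
    (differentiableOn_indicator_of_isOpen hC hΩC (differentiableOn_const 1))
  let L : ℂ[X] →ₗ[ℂ] supportedOn Ω C :=
    (LinearMap.mulLeft ℂ e ∘ₗ (ofPolynomial Ω).toLinearMap).codRestrict _
      fun p z hz => by simp [e, hz]
  have hL : Function.Injective L := by
    refine (injective_iff_map_eq_zero L).mpr fun p hp => ?_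
    refine p.eq_zero_of_infinite_isRoot (hne.mono fun z hz => ?_)
    have hpz := congrArg (fun h : supportedOn Ω C => (h : C(Ω, ℂ)) ⟨z, hz.1⟩) hp
    change C.indicator 1 z * (ofPolynomial Ω p : C(Ω, ℂ)) ⟨z, hz.1⟩ = 0 at hpz
    simpa [hz.2] using hpz
  intro hfin
  have : Finite ℕ := ((basisMonomials ℂ).linearIndependent.map_injOn L hL.injOn).finite
  exact not_finite ℕ

theorem eq_zero_of_mem_supportedOn_connectedComponentIn (hΩ : IsOpen Ω) {z₀ : ℂ} (hz₀ : z₀ ∈ Ω)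
    {h : Hol Ω} (hh : h ∈ supportedOn Ω (connectedComponentIn Ω z₀)) {g : ℂ → ℂ}
    (hg : DifferentiableOn ℂ g Ω) (hhg : ∀ z : Ω, (h : C(Ω, ℂ)) z = g z)
    (h0 : ∀ᶠ z in 𝓝 z₀, g z = 0) : h = 0 := by
  have hg0 : EqOn g 0 (connectedComponentIn Ω z₀) :=
    ((hg.analyticOnNhd hΩ).mono
      (connectedComponentIn_subset Ω z₀)).eqOn_zero_of_preconnected_of_eventuallyEq_zero
        isPreconnected_connectedComponentIn (mem_connectedComponentIn hz₀) h0
  ext z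
  by_cases hz : (z : ℂ) ∈ connectedComponentIn Ω z₀
  · exact (hhg z).trans (hg0 hz)
  · exact hh z hz

end Hol

section Multiples

theorem isClosedEmbedding_smul_of_apply_eq_one {ι R : Type*} [TopologicalSpace R] [T2Space R]
    [MulOneClass R] [ContinuousMul R] {f : ι → R} {i : ι} (hi : f i = 1) :
    IsClosedEmbedding fun r : R => r • f :=
  Function.LeftInverse.isClosedEmbedding (f := fun F : ι → R => F i) (fun r => by simp [hi])
    (continuous_apply i) (by fun_prop)

variable {Ω : Set ℂ}

theorem smul_mem_Sp (h : Hol Ω) {F : HSeq Ω} (hF : F ∈ Sp Ω) : h • F ∈ Sp Ω := fun z => by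
  simpa using (hF z).const_mul ((h : C(Ω, ℂ)) z)

theorem tendstoUniformlyOn_of_mem_Suc {F : HSeq Ω} (hF : F ∈ Suc Ω) {K : Set ℂ} (hK : IsCompact K)
    (hKΩ : K ⊆ Ω) {g : ℕ → ℂ → ℂ} (hg : ∀ n (z : Ω), (F n : C(Ω, ℂ)) z = g n z) :
    TendstoUniformlyOn g 0 atTop K := by
  have hK' : IsCompact (Subtype.val ⁻¹' K : Set Ω) := by
    rwa [Subtype.isCompact_iff, Subtype.image_preimage_coe, inter_eq_right.mpr hKΩ]
  have hunif := Metric.tendstoUniformlyOn_iff.mp (hF _ hK')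
  refine Metric.tendstoUniformlyOn_iff.mpr fun ε hε => (hunif ε hε).mono fun n hn z hz => ?_
  simpa [hg] using hn ⟨z, hKΩ hz⟩ hz

theorem smul_notMem_Suc (hΩ : IsOpen Ω) {z₀ : ℂ} (hz₀ : z₀ ∈ Ω) {p : ℕ → ℂ[X]}
    (hp : ∀ s ∈ 𝓝 z₀, ¬ TendstoUniformlyOn (fun n z => (p n).eval z) 0 atTop s) {h : Hol Ω}
    (hh : h ∈ Hol.supportedOn Ω (connectedComponentIn Ω z₀)) (h0 : h ≠ 0) :
    h • (fun n => Hol.ofPolynomial Ω (p n) : HSeq Ω) ∉ Suc Ω := by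
  intro hmem
  obtain ⟨g, hg, hhg⟩ := h.2
  obtain ⟨K, hK₀, hKΩ, hK⟩ := local_compact_nhds (hΩ.mem_nhds hz₀)
  have hunif : TendstoUniformlyOn (fun n z => (p n).eval z * g z) 0 atTop K :=
    tendstoUniformlyOn_of_mem_Suc hmem hK hKΩ fun n z => by simp [hhg, mul_comm]
  obtain ⟨s, hs, hps⟩ := exists_mem_nhds_tendstoUniformlyOn_zero_of_mul hK₀
    (fun n => (p n).differentiable.differentiableOn) (hg.mono hKΩ)
    (fun hg0 => h0 (Hol.eq_zero_of_mem_supportedOn_connectedComponentIn hΩ hz₀ hh hg hhg hg0)) hunif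
  exact hp s hs hps

end Multiples

/-- `S_p \ S_uc` is spaceable in `H(Ω)^ℕ`. -/
theorem Sp_diff_Suc_spaceable
    (Ω : Set ℂ) (hΩ : IsOpen Ω) (hne : Ω.Nonempty) :
    ∃ M : Submodule ℂ (HSeq Ω),
      IsClosed (M : Set (HSeq Ω)) ∧ ¬ Module.Finite ℂ M ∧
      (M : Set (HSeq Ω)) \ {0} ⊆ Sp Ω \ Suc Ω := by
  obtain ⟨z₀, hz₀⟩ := hne
  obtain ⟨p, hp_zero, hp_tendsto, hp_unif⟩ :=
    exists_polynomial_seq_tendsto_zero_not_tendstoUniformlyOn z₀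
  let f : HSeq Ω := fun n => Hol.ofPolynomial Ω (p n)
  have hf : f ∈ Sp Ω := fun z => by simpa [f] using hp_tendsto z
  let N := Hol.supportedOn Ω (connectedComponentIn Ω z₀)
  have hN : ¬ Module.Finite ℂ N := Hol.not_finite_supportedOn hΩ.connectedComponentIn
    (isOpen_sdiff_connectedComponentIn hΩ z₀) <| infinite_of_mem_nhds z₀ <|
      inter_mem (hΩ.mem_nhds hz₀) (connectedComponentIn_mem_nhds (hΩ.mem_nhds hz₀))
  let Φ : Hol Ω →ₗ[ℂ] HSeq Ω := (LinearMap.toSpanSingleton (Hol Ω) (HSeq Ω) f).restrictScalars ℂ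
  have : LocallyCompactSpace Ω := hΩ.locallyCompactSpace
  have hΦ : IsClosedEmbedding Φ :=
    isClosedEmbedding_smul_of_apply_eq_one (f := f) (i := 0) (by simp [f, hp_zero])
  refine ⟨N.map Φ, hΦ.isClosedMap _ (Hol.isClosed_supportedOn _), fun hfin => hN ?_, ?_⟩
  · exact Module.Finite.equiv (N.equivMapOfInjective Φ hΦ.injective).symm
  · rintro _ ⟨⟨h, hh, rfl⟩, hne⟩
    have h0 : h ≠ 0 := by
      rintro rfl
      exact hne (map_zero Φ)
    exact ⟨smul_mem_Sp h hf, smul_notMem_Suc hΩ hz₀ hp_unif hh h0⟩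
end

section
/- Let Ω be a nonempty open subset of ℂ. Then the set S_uc \ S_u is pointwise spaceable in H(Ω)^ℕ: for every f ∈ S_uc \ S_u there exists a closed infinite-dimensional vector subspace M of H(Ω)^ℕ such that f ∈ M and M \ {0} ⊆ S_uc \ S_u. -/
open Filter Topology

set_option synthInstance.maxHeartbeats 1000000
set_option maxHeartbeats 1000000

/-!
Let `f ∈ S_uc \ S_u`, fix a connected component `U` of `Ω` with indicator function `u`, and a
sequence `d` dense in a compact neighbourhood of a point of `U`: a holomorphic function vanishing at
every `d k` vanishes on `U`, and every holomorphic function is bounded on the range of `d`.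
Since `f` does not tend to `0` uniformly, some `ε > 0` is reached by infinitely many `‖f n‖_Ω`;
label the indices by `j : ℕ → ℕ` so that this happens infinitely often within each label class.

The sequences `n ↦ h (d (j n)) • f n`, `h ∈ H(Ω)`, tend to `0` on compacta, and uniformly only if
`h` vanishes at every `d k`. They form an infinite-dimensional space containing `f` (take `h = u`),
but not a closed one. Adding `u * h - h (d (j n₀)) • u` to a single entry `n₀` affects none of these
properties and lets one recover `u * h` continuously from the perturbed sequence, the scalar
`h (d (j n₀))` being read off another entry with the same label. Hence the range becomes closed.
-/

theorem isClosed_range_of_comp_comp_eq {X Y : Type*} [TopologicalSpace X] [TopologicalSpace Y]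
    [T2Space Y] {f : X → Y} {g : Y → X} (hf : Continuous f) (hg : Continuous g)
    (hfg : ∀ x, f (g (f x)) = f x) : IsClosed (Set.range f) := by
  have hrange : Set.range f = {y | f (g y) = y} := by
    ext y
    exact ⟨by rintro ⟨x, rfl⟩; exact hfg x, fun hy => ⟨g y, hy⟩⟩
  rw [hrange]
  exact isClosed_eq (hf.comp hg) continuous_id

theorem exists_forall_frequently_and_eq {ι : Type*} [Countable ι] [Nonempty ι] {P : ℕ → Prop}
    (hP : ∃ᶠ n in atTop, P n) : ∃ j : ℕ → ι, ∀ k, ∃ᶠ n in atTop, P n ∧ j n = k := by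
  obtain ⟨φ, hφ, hPφ⟩ := extraction_of_frequently_atTop hP
  obtain ⟨e, he⟩ := exists_surjective_nat ι
  refine ⟨Function.extend φ (fun i => e i.unpair.1) (fun _ => e 0), fun k => ?_⟩
  obtain ⟨l, rfl⟩ := he k
  refine frequently_atTop.2 fun N => ⟨φ (Nat.pair l N), ?_, hPφ _, ?_⟩
  · exact (Nat.right_le_pair l N).trans hφ.le_apply
  · simp [hφ.injective.extend_apply]

section UniformConvergence

variable {ι α 𝕜 E : Type*} [NormedField 𝕜] [SeminormedAddCommGroup E] [NormedSpace 𝕜 E]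
  {l : Filter ι}

theorem tendstoUniformlyOn_zero_of_eventually_eq_smul {F G : ι → α → E} {s : Set α} {m : ι → 𝕜}
    {B : ℝ} (hF : TendstoUniformlyOn F 0 l s) (hm : ∀ n, ‖m n‖ ≤ B)
    (hG : ∀ᶠ n in l, ∀ x ∈ s, G n x = m n • F n x) : TendstoUniformlyOn G 0 l s := by
  rw [Metric.tendstoUniformlyOn_iff] at hF ⊢
  simp only [Pi.zero_apply, dist_zero_left] at hF ⊢
  intro ε hε
  have hB : 0 < max B 1 := lt_max_of_lt_right one_pos
  filter_upwards [hF (ε / max B 1) (div_pos hε hB), hG] with n hFn hGn x hx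
  calc ‖G n x‖ = ‖m n‖ * ‖F n x‖ := by rw [hGn x hx, norm_smul]
    _ ≤ max B 1 * ‖F n x‖ := by gcongr; exact (hm n).trans (le_max_left B 1)
    _ < ε := by rw [mul_comm]; exact (lt_div_iff₀ hB).1 (hFn x hx)

theorem not_tendstoUniformly_zero_iff {F : ι → α → E} :
    ¬ TendstoUniformly F 0 l ↔ ∃ ε > 0, ∃ᶠ n in l, ∃ x, ε ≤ ‖F n x‖ := by
  simp only [Metric.tendstoUniformly_iff, Pi.zero_apply, dist_zero_left, not_forall,
    not_eventually, not_lt, exists_prop]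

theorem not_tendstoUniformly_zero_of_frequently_eq_smul {F G : ι → α → E} {ε : ℝ} {c : 𝕜}
    (hε : 0 < ε) (hc : c ≠ 0)
    (h : ∃ᶠ n in l, (∃ x, ε ≤ ‖F n x‖) ∧ ∀ x, G n x = c • F n x) :
    ¬ TendstoUniformly G 0 l := by
  refine not_tendstoUniformly_zero_iff.2 ⟨‖c‖ * ε, by positivity, h.mono ?_⟩
  rintro n ⟨⟨x, hx⟩, hG⟩
  refine ⟨x, ?_⟩
  rw [hG, norm_smul]
  gcongr

end UniformConvergence

section PerturbedMultiplier

variable {ι 𝕜 E : Type*} [DecidableEq ι] [Field 𝕜] [TopologicalSpace 𝕜]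
  [AddCommGroup E] [Module 𝕜 E] [TopologicalSpace E] [IsTopologicalAddGroup E]
  [ContinuousSMul 𝕜 E]

/-- The operator sending `x` to the family `(χ i x • f i)_i` perturbed in its `i₀`-th entry by
`P x - χ i₀ x • e`. In the application `P` is a projection fixing `e` and the functionals `χ i`
take the value `1` at `e`, so that `e` is mapped to the unperturbed family `f`. -/
def perturbedMultiplier (χ : ι → E →L[𝕜] 𝕜) (f : ι → E) (P : E →L[𝕜] E) (e : E) (i₀ : ι) :
    E →L[𝕜] (ι → E) :=
  .pi (fun i => (χ i).smulRight (f i)) +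
    (ContinuousLinearMap.single 𝕜 (fun _ => E) i₀).comp (P - (χ i₀).smulRight e)

variable {χ : ι → E →L[𝕜] 𝕜} {f : ι → E} {P : E →L[𝕜] E} {e : E} {i₀ i₁ : ι}

theorem perturbedMultiplier_apply (x : E) :
    perturbedMultiplier χ f P e i₀ x =
      (fun i => χ i x • f i) + Pi.single i₀ (P x - χ i₀ x • e) :=
  rfl

theorem perturbedMultiplier_apply_of_ne {i : ι} (hi : i ≠ i₀) (x : E) :
    perturbedMultiplier χ f P e i₀ x i = χ i x • f i := by
  simp [perturbedMultiplier_apply, hi]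

theorem perturbedMultiplier_apply_self (x : E) :
    perturbedMultiplier χ f P e i₀ x i₀ = P x + χ i₀ x • (f i₀ - e) := by
  simp only [perturbedMultiplier_apply, Pi.add_apply, Pi.single_eq_same]
  module

theorem perturbedMultiplier_eq_self (he : P e = e) (hχe : ∀ i, χ i e = 1) :
    perturbedMultiplier χ f P e i₀ e = f := by
  simp [perturbedMultiplier_apply, he, hχe]

theorem perturbedMultiplier_comp_projection (hP : ∀ x, P (P x) = P x)
    (hχP : ∀ i x, χ i (P x) = χ i x) (x : E) :
    perturbedMultiplier χ f P e i₀ (P x) = perturbedMultiplier χ f P e i₀ x := by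
  simp [perturbedMultiplier_apply, hP, hχP]

theorem exists_perturbedMultiplier_retraction (hi : i₁ ≠ i₀) (hχ : χ i₁ = χ i₀)
    {ℓ : E →L[𝕜] 𝕜} (hℓ : ℓ (f i₁) ≠ 0) :
    ∃ R : (ι → E) →L[𝕜] E, ∀ x, R (perturbedMultiplier χ f P e i₀ x) = P x := by
  refine ⟨.proj i₀ - (ℓ.comp (.proj (φ := fun _ => E) i₁)).smulRight
    ((ℓ (f i₁))⁻¹ • (f i₀ - e)), fun x => ?_⟩
  simp [perturbedMultiplier_apply_self, perturbedMultiplier_apply_of_ne hi, hχ, smul_smul, hℓ]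

theorem isClosed_range_perturbedMultiplier [T2Space E] (hP : ∀ x, P (P x) = P x)
    (hχP : ∀ i x, χ i (P x) = χ i x) (hi : i₁ ≠ i₀) (hχ : χ i₁ = χ i₀)
    {ℓ : E →L[𝕜] 𝕜} (hℓ : ℓ (f i₁) ≠ 0) :
    IsClosed (Set.range (perturbedMultiplier χ f P e i₀)) := by
  obtain ⟨R, hR⟩ := exists_perturbedMultiplier_retraction (P := P) (e := e) hi hχ hℓ
  refine isClosed_range_of_comp_comp_eq (map_continuous _) (map_continuous R) fun x => ?_
  rw [hR, perturbedMultiplier_comp_projection hP hχP]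

theorem perturbedMultiplier_eq_zero_iff (hP : ∀ x, P (P x) = P x)
    (hχP : ∀ i x, χ i (P x) = χ i x) (hi : i₁ ≠ i₀) (hχ : χ i₁ = χ i₀)
    {ℓ : E →L[𝕜] 𝕜} (hℓ : ℓ (f i₁) ≠ 0) {x : E} :
    perturbedMultiplier χ f P e i₀ x = 0 ↔ P x = 0 := by
  obtain ⟨R, hR⟩ := exists_perturbedMultiplier_retraction (P := P) (e := e) hi hχ hℓ
  refine ⟨fun hx => by rw [← hR x, hx, map_zero], fun hx => ?_⟩
  rw [← perturbedMultiplier_comp_projection hP hχP, hx, map_zero]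

end PerturbedMultiplier

namespace Hol

variable {Ω : Set ℂ}

instance : IsTopologicalAddGroup (Hol Ω) :=
  inferInstanceAs (IsTopologicalAddGroup (Subalgebra.toSubmodule (Hol Ω)))

/-- Point evaluation as a continuous linear functional on `H(Ω)`. -/
noncomputable def evalCLM (z : Ω) : Hol Ω →L[ℂ] ℂ :=
  (ContinuousMap.evalCLM ℂ z).comp (Subalgebra.toSubmodule (Hol Ω)).subtypeL

@[simp]
theorem evalCLM_apply (z : Ω) (h : Hol Ω) : evalCLM z h = (h : C(Ω, ℂ)) z :=
  rfl

/-- The coordinate function `z ↦ z` of `H(Ω)`, used to embed the polynomials in `H(Ω)`. -/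
def coord (Ω : Set ℂ) : Hol Ω :=
  ⟨⟨fun z => z, continuous_subtype_val⟩, id, differentiableOn_id, fun _ => rfl⟩

theorem aeval_coord_apply (p : Polynomial ℂ) (z : Ω) :
    (Polynomial.aeval (coord Ω) p : C(Ω, ℂ)) z = p.eval (z : ℂ) := by
  induction p using Polynomial.induction_on' with
  | add p q hp hq => simp_all
  | monomial n c => simp [Polynomial.aeval_monomial, coord, Algebra.algebraMap_eq_smul_one]

theorem not_finite_range_of_forall_eq_zero {V : Type*} [AddCommGroup V] [Module ℂ V]
    {T : Hol Ω →ₗ[ℂ] V} {S : Set Ω} (hS : S.Infinite)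
    (hT : ∀ h, T h = 0 → ∀ z ∈ S, (h : C(Ω, ℂ)) z = 0) :
    ¬ Module.Finite ℂ (LinearMap.range T) := by
  intro _
  let A : Polynomial ℂ →ₗ[ℂ] LinearMap.range T :=
    T.rangeRestrict ∘ₗ (Polynomial.aeval (coord Ω)).toLinearMap
  refine Polynomial.not_finite (Module.Finite.of_injective A ?_)
  refine (injective_iff_map_eq_zero A).2 fun p hp => ?_
  refine p.eq_zero_of_infinite_isRoot
    ((hS.image Subtype.val_injective.injOn).mono ?_)
  rintro _ ⟨z, hz, rfl⟩
  exact (aeval_coord_apply p z).symm.trans (hT _ (congrArg Subtype.val hp) z hz)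

/-- A locally constant function on an open set, as an element of `H(Ω)`; applied to the indicator
function of a connected component. -/
noncomputable def ofLocallyConstant (hΩ : IsOpen Ω) (φ : LocallyConstant Ω ℂ) : Hol Ω := by
  refine ⟨φ, Function.extend Subtype.val φ 0, fun z hz => ?_,
    fun z => (Subtype.val_injective.extend_apply φ 0 z).symm⟩
  have hloc : Function.extend Subtype.val φ 0 =ᶠ[𝓝 z] fun _ => φ ⟨z, hz⟩ := by
    rw [← hΩ.isOpenEmbedding_subtypeVal.map_nhds_eq ⟨z, hz⟩, EventuallyEq, eventually_map]
    filter_upwards [φ.isLocallyConstant.eventually_eq ⟨z, hz⟩] with w hw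
    rwa [Subtype.val_injective.extend_apply]
  exact (hloc.differentiableAt_iff.2 (differentiableAt_const _)).differentiableWithinAt

/-- The projection of `H(Ω)` that keeps a function on the clopen set `U` and makes it `0` off `U`,
as multiplication by the indicator function of `U`. -/
noncomputable def indicatorCLM (hΩ : IsOpen Ω) {U : Set Ω} (hU : IsClopen U) :
    Hol Ω →L[ℂ] Hol Ω :=
  { LinearMap.mulLeft ℂ (ofLocallyConstant hΩ (LocallyConstant.charFn ℂ hU)) with
    cont := by
      have := hΩ.locallyCompactSpace
      exact continuous_const_mul _ }

section Indicator

variable (hΩ : IsOpen Ω) {U : Set Ω} (hU : IsClopen U) (h : Hol Ω)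

theorem indicatorCLM_apply (z : Ω) :
    (indicatorCLM hΩ hU h : C(Ω, ℂ)) z = U.indicator (h : C(Ω, ℂ)) z := by
  change U.indicator (1 : Ω → ℂ) z * (h : C(Ω, ℂ)) z = _
  simp only [← Set.indicator_mul_left, Pi.one_apply, one_mul]

theorem indicatorCLM_indicatorCLM :
    indicatorCLM hΩ hU (indicatorCLM hΩ hU h) = indicatorCLM hΩ hU h := by
  ext z
  by_cases hz : z ∈ U <;> simp [indicatorCLM_apply, hz]

theorem indicatorCLM_eq_zero_iff :
    indicatorCLM hΩ hU h = 0 ↔ Set.EqOn (h : C(Ω, ℂ)) 0 U := by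
  refine ⟨fun hz z hzU => ?_, fun hz => ?_⟩
  · rw [← Set.indicator_of_mem hzU (h : C(Ω, ℂ)), ← indicatorCLM_apply hΩ hU, hz]
    rfl
  · ext z
    rw [indicatorCLM_apply, Set.indicator_apply_eq_zero.2 fun hzU => hz hzU]
    rfl

end Indicator

theorem eqOn_zero_of_isPreconnected_of_eventually_eq_zero (hΩ : IsOpen Ω) {h : Hol Ω} {U : Set Ω}
    (hU : IsPreconnected U) {z₀ : Ω} (hz₀ : z₀ ∈ U)
    (hzero : ∀ᶠ z in 𝓝 z₀, (h : C(Ω, ℂ)) z = 0) :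
    Set.EqOn (h : C(Ω, ℂ)) 0 U := by
  obtain ⟨g, hg, hhg⟩ := h.2
  have hgan : AnalyticOnNhd ℂ g (Subtype.val '' U) :=
    (hg.analyticOnNhd hΩ).mono (Subtype.coe_image_subset Ω U)
  have hgzero : g =ᶠ[𝓝 (z₀ : ℂ)] 0 := by
    rw [← hΩ.isOpenEmbedding_subtypeVal.map_nhds_eq, EventuallyEq, eventually_map]
    filter_upwards [hzero] with z hz
    rwa [← hhg]
  intro z hz
  rw [hhg]
  exact hgan.eqOn_zero_of_preconnected_of_eventuallyEq_zero
    (hU.image _ continuous_subtype_val.continuousOn) (Set.mem_image_of_mem _ hz₀) hgzero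
    (Set.mem_image_of_mem _ hz)

theorem exists_bounded_uniqueness_sequence (hΩ : IsOpen Ω) (z₀ : Ω) :
    ∃ d : ℕ → Ω, (∀ k, d k ∈ connectedComponent z₀) ∧
      (∀ h : Hol Ω, ∃ B, ∀ k, ‖(h : C(Ω, ℂ)) (d k)‖ ≤ B) ∧
      ∀ h : Hol Ω, (∀ k, (h : C(Ω, ℂ)) (d k) = 0) →
        Set.EqOn (h : C(Ω, ℂ)) 0 (connectedComponent z₀) := by
  have := hΩ.locallyConnectedSpace
  have := hΩ.locallyCompactSpace
  obtain ⟨K, hKz₀, hKU, hK⟩ :=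
    local_compact_nhds ((isOpen_connectedComponent (x := z₀)).mem_nhds mem_connectedComponent)
  have : Nonempty K := ⟨⟨z₀, mem_of_mem_nhds hKz₀⟩⟩
  refine ⟨fun k => TopologicalSpace.denseSeq K k, fun k => hKU (Subtype.prop _), fun h => ?_,
    fun h hd => ?_⟩
  · obtain ⟨B, hB⟩ := hK.exists_bound_of_continuousOn (h : C(Ω, ℂ)).continuous.continuousOn
    exact ⟨B, fun k => hB _ (Subtype.prop _)⟩
  · have hzeroK : (fun z : K => (h : C(Ω, ℂ)) z) = 0 :=
      (TopologicalSpace.denseRange_denseSeq K).equalizer (by fun_prop) continuous_const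
        (funext hd)
    refine eqOn_zero_of_isPreconnected_of_eventually_eq_zero hΩ isPreconnected_connectedComponent
      mem_connectedComponent ?_
    filter_upwards [hKz₀] with z hz using congrFun hzeroK ⟨z, hz⟩

end Hol

theorem infinite_connectedComponent_of_isOpen {Ω : Set ℂ} (hΩ : IsOpen Ω) (z₀ : Ω) :
    (connectedComponent z₀).Infinite := by
  have := hΩ.locallyConnectedSpace
  have hopen : IsOpen (Subtype.val '' connectedComponent z₀) :=
    hΩ.isOpenMap_subtype_val _ isOpen_connectedComponent
  exact .of_image _ (infinite_of_mem_nhds (z₀ : ℂ)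
    (hopen.mem_nhds (Set.mem_image_of_mem _ mem_connectedComponent)))

namespace HSeq

variable {Ω : Set ℂ} {f g : HSeq Ω}

theorem mem_Suc_of_eventually_eq_smul {m : ℕ → ℂ} {B : ℝ} (hf : f ∈ Suc Ω)
    (hm : ∀ n, ‖m n‖ ≤ B) (hg : ∀ᶠ n in atTop, g n = m n • f n) : g ∈ Suc Ω := fun K hK =>
  tendstoUniformlyOn_zero_of_eventually_eq_smul (hf K hK) hm <|
    hg.mono fun n hn z _ => by rw [hn]; rfl

theorem notMem_Su_of_frequently_eq_smul {ε : ℝ} {c : ℂ} (hε : 0 < ε) (hc : c ≠ 0)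
    (h : ∃ᶠ n in atTop, (∃ z, ε ≤ ‖(f n : C(Ω, ℂ)) z‖) ∧ g n = c • f n) : g ∉ Su Ω :=
  not_tendstoUniformly_zero_of_frequently_eq_smul hε hc <|
    h.mono fun n hn => ⟨hn.1, fun z => by rw [hn.2]; rfl⟩

theorem exists_multiplier_isClosed_range (hΩ : IsOpen Ω) {U : Set Ω} (hU : IsClopen U)
    {a : ℕ → Ω} (ha : ∀ n, a n ∈ U) {n₀ n₁ : ℕ} (hn : n₁ ≠ n₀) (han : a n₁ = a n₀) {z₁ : Ω}
    (hfz₁ : (f n₁ : C(Ω, ℂ)) z₁ ≠ 0) :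
    ∃ T : Hol Ω →L[ℂ] HSeq Ω, IsClosed (Set.range T) ∧ f ∈ Set.range T ∧
      (∀ h, T h = 0 ↔ Set.EqOn (h : C(Ω, ℂ)) 0 U) ∧
      ∀ h n, n ≠ n₀ → T h n = (h : C(Ω, ℂ)) (a n) • f n := by
  let χ : ℕ → Hol Ω →L[ℂ] ℂ := fun n => Hol.evalCLM (a n)
  let P := Hol.indicatorCLM hΩ hU
  have hPP : ∀ h, P (P h) = P h := Hol.indicatorCLM_indicatorCLM hΩ hU
  have hχP : ∀ n h, χ n (P h) = χ n h := fun n h => by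
    simp [χ, P, Hol.indicatorCLM_apply, ha]
  have hχ : χ n₁ = χ n₀ := congrArg Hol.evalCLM han
  have hℓ : Hol.evalCLM z₁ (f n₁) ≠ 0 := hfz₁
  exact ⟨perturbedMultiplier χ f P (P 1) n₀,
    isClosed_range_perturbedMultiplier hPP hχP hn hχ hℓ,
    ⟨P 1, perturbedMultiplier_eq_self (hPP 1) fun n => hχP n 1⟩,
    fun h => (perturbedMultiplier_eq_zero_iff hPP hχP hn hχ hℓ).trans
      (Hol.indicatorCLM_eq_zero_iff hΩ hU h),
    fun h n hn => perturbedMultiplier_apply_of_ne hn h⟩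

end HSeq

/-- `S_uc \ S_u` is pointwise spaceable in `H(Ω)^ℕ`. -/
theorem Suc_diff_Su_pointwise_spaceable
    (Ω : Set ℂ) (hΩ : IsOpen Ω) (hne : Ω.Nonempty) :
    ∀ f ∈ Suc Ω \ Su Ω, ∃ M : Submodule ℂ (HSeq Ω),
      IsClosed (M : Set (HSeq Ω)) ∧ ¬ Module.Finite ℂ M ∧
      f ∈ M ∧ (M : Set (HSeq Ω)) \ {0} ⊆ Suc Ω \ Su Ω := by
  rintro f ⟨hfc, hfu⟩
  obtain ⟨z₀⟩ := hne.to_subtype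
  have := hΩ.locallyConnectedSpace
  obtain ⟨d, hdU, hdB, hd⟩ := Hol.exists_bounded_uniqueness_sequence hΩ z₀
  obtain ⟨ε, hε, hfε⟩ := not_tendstoUniformly_zero_iff.1 hfu
  obtain ⟨j, hj⟩ := exists_forall_frequently_and_eq (ι := ℕ) hfε
  obtain ⟨n₀, -, hn₀⟩ := (hj 0).exists
  obtain ⟨n₁, ⟨⟨z₁, hz₁⟩, hn₁⟩, hn⟩ := ((hj 0).and_eventually (eventually_ne_atTop n₀)).exists
  obtain ⟨T, hTclosed, hfT, hT₀, hT⟩ := HSeq.exists_multiplier_isClosed_range hΩ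
    isClopen_connectedComponent (fun n => hdU (j n)) hn (by rw [hn₀, hn₁])
    (norm_pos_iff.1 (hε.trans_le hz₁))
  refine ⟨LinearMap.range T.toLinearMap, hTclosed, Hol.not_finite_range_of_forall_eq_zero
    (V := HSeq Ω) (infinite_connectedComponent_of_isOpen hΩ z₀) fun h => (hT₀ h).1, hfT, ?_⟩
  rintro _ ⟨⟨h, rfl⟩, hTh⟩
  obtain ⟨B, hB⟩ := hdB h
  obtain ⟨k, hk⟩ : ∃ k, (h : C(Ω, ℂ)) (d k) ≠ 0 := by
    by_contra! hk
    exact hTh ((hT₀ h).2 (hd h hk))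
  have hTf : ∀ᶠ n in atTop, T h n = (h : C(Ω, ℂ)) (d (j n)) • f n :=
    (eventually_ne_atTop n₀).mono (hT h)
  exact ⟨HSeq.mem_Suc_of_eventually_eq_smul hfc (fun n => hB (j n)) hTf,
    HSeq.notMem_Su_of_frequently_eq_smul (f := f) hε hk <|
      ((hj k).and_eventually hTf).mono fun n hn => ⟨hn.1.1, hn.1.2 ▸ hn.2⟩⟩
end
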